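/- Let U be a quasitriangular Hopf algebra with universal R-matrix R, H ⊆ U a Hopf subalgebra, and L an H-base algebra. Let F̄ ∈ U ⊗ U ⊗ L be a universal dynamical twist, i.e. an invertible element satisfying the H-equivariance h⁽¹⁾F̄₁ ⊗ h⁽²⁾F̄₂ ⊗ h⁽³⁾ ▷ F̄₃ = F̄₁h⁽¹⁾ ⊗ F̄₂h⁽²⁾ ⊗ F̄₃ for h ∈ H, the shifted cocycle condition (Δ⊗id)(F̄) · ⁽³⁾F̄₁₂ = (id⊗Δ)(F̄) · F̄₂₃, and normalization (ε⊗id⊗id)(F̄) = 1 = (id⊗ε⊗id)(F̄). Then R̄ := F̄₂₁⁻¹ R F̄ is a universal quantum dynamical R-matrix: it satisfies the equivariance condition h⁽²⁾R̄₁ ⊗ h⁽¹⁾R̄₂ ⊗ h⁽³⁾▷R̄₃ = R̄₁h⁽¹⁾ ⊗ R̄₂h⁽²⁾ ⊗ R̄₃ and the quantum dynamical Yang–Baxter equation R̄₁₂ · ⁽²⁾R̄₁₃ · R̄₂₃ = ⁽¹⁾R̄₂₃ · R̄₁₃ · ⁽³⁾R̄₁₂ in U ⊗ U ⊗ U ⊗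 L. -/

import Mathlib

/-!
STATEMENT 17: Let `U` be a quasitriangular Hopf algebra with universal R-matrix `r`,
`H ⊆ U` a Hopf subalgebra, and `L` an `H`-base algebra.  If `F̄ ∈ U ⊗ U ⊗ L` is a
universal dynamical twist (invertible, `H`-equivariant, satisfying the shifted cocycle
condition and the normalization), then `R̄ := F̄₂₁⁻¹ r F̄` is a universal quantum
dynamical R-matrix: it satisfies the equivariance condition
`h⁽²⁾R̄₁ ⊗ h⁽¹⁾R̄₂ ⊗ h⁽³⁾ ▷ R̄₃ = R̄₁h⁽¹⁾ ⊗ R̄₂h⁽²⁾ ⊗ R̄₃` and the quantum dynamical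
Yang–Baxter equation `R̄₁₂ ⁽²⁾R̄₁₃ R̄₂₃ = ⁽¹⁾R̄₂₃ R̄₁₃ ⁽³⁾R̄₁₂` in `U ⊗ U ⊗ U ⊗ L`.
-/

open TensorProduct LinearMap

noncomputable section

variable (k : Type*) [CommRing k]

def rot3 (A B C : Type*) [AddCommGroup A] [Module k A] [AddCommGroup B] [Module k B]
    [AddCommGroup C] [Module k C] :
    (A ⊗[k] B) ⊗[k] C →ₗ[k] (A ⊗[k] C) ⊗[k] B :=
  (TensorProduct.assoc k A C B).symm.toLinearMap ∘ₗ
    (LinearMap.lTensor A (TensorProduct.comm k B C).toLinearMap) ∘ₗ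
    (TensorProduct.assoc k A B C).toLinearMap

variable {U : Type*} [Ring U] [HopfAlgebra k U]
variable {H : Type*} [Ring H] [HopfAlgebra k H]
variable {L : Type*} [Ring L] [Algebra k L]

/-- Insertion of an element of `U ⊗ U ⊗ L` into slots `(1,2)` of `U ⊗ U ⊗ U ⊗ L`. -/
def emb12 : (U ⊗[k] U) ⊗[k] L →ₗ[k] ((U ⊗[k] U) ⊗[k] U) ⊗[k] L :=
  LinearMap.rTensor L ((TensorProduct.mk k (U ⊗[k] U) U).flip 1)

/-- Insertion into slots `(1,3)`. -/
def emb13 : (U ⊗[k] U) ⊗[k] L →ₗ[k] ((U ⊗[k] U) ⊗[k] U) ⊗[k] L :=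
  LinearMap.rTensor L (LinearMap.rTensor U ((TensorProduct.mk k U U).flip 1))

/-- Insertion into slots `(2,3)`. -/
def emb23 : (U ⊗[k] U) ⊗[k] L →ₗ[k] ((U ⊗[k] U) ⊗[k] U) ⊗[k] L :=
  LinearMap.rTensor L (LinearMap.rTensor U (TensorProduct.mk k U U 1))

/-- `X̄ ↦ ⁽³⁾X̄₁₂`: apply the coaction `δ` of `L` and put the `H`-component into the
third `U`-slot via `incl`. -/
def coact3of12 (incl : H →ₗ[k] U) (δ : L →ₗ[k] H ⊗[k] L) :
    (U ⊗[k] U) ⊗[k] L →ₗ[k] ((U ⊗[k] U) ⊗[k] U) ⊗[k] L :=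
  (TensorProduct.assoc k (U ⊗[k] U) U L).symm.toLinearMap ∘ₗ
    (LinearMap.lTensor (U ⊗[k] U) (LinearMap.rTensor L incl)) ∘ₗ
    (LinearMap.lTensor (U ⊗[k] U) δ)

/-- `X̄ ↦ ⁽²⁾X̄₁₃`. -/
def coact2of13 (incl : H →ₗ[k] U) (δ : L →ₗ[k] H ⊗[k] L) :
    (U ⊗[k] U) ⊗[k] L →ₗ[k] ((U ⊗[k] U) ⊗[k] U) ⊗[k] L :=
  (LinearMap.rTensor L (rot3 k U U U)) ∘ₗ coact3of12 k incl δ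

/-- `X̄ ↦ ⁽¹⁾X̄₂₃`. -/
def coact1of23 (incl : H →ₗ[k] U) (δ : L →ₗ[k] H ⊗[k] L) :
    (U ⊗[k] U) ⊗[k] L →ₗ[k] ((U ⊗[k] U) ⊗[k] U) ⊗[k] L :=
  (LinearMap.rTensor L
      ((LinearMap.rTensor U (TensorProduct.comm k U U).toLinearMap) ∘ₗ (rot3 k U U U))) ∘ₗ
    coact3of12 k incl δ

/-- Left multiplication `h ⊗ X̄ ↦ h⁽¹⁾X̄₁ ⊗ h⁽²⁾X̄₂ ⊗ h⁽³⁾ ▷ X̄₃`. -/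
def leftAct3 (incl : H →ₗ[k] U) (actL : H ⊗[k] L →ₗ[k] L) :
    H ⊗[k] ((U ⊗[k] U) ⊗[k] L) →ₗ[k] (U ⊗[k] U) ⊗[k] L :=
  (TensorProduct.map
      ((TensorProduct.map
          ((LinearMap.mul' k U) ∘ₗ (LinearMap.rTensor U incl))
          ((LinearMap.mul' k U) ∘ₗ (LinearMap.rTensor U incl))) ∘ₗ
        (TensorProduct.tensorTensorTensorComm k H H U U).toLinearMap)
      actL) ∘ₗ
    (TensorProduct.tensorTensorTensorComm k (H ⊗[k] H) H (U ⊗[k] U) L).toLinearMap ∘ₗ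
    (LinearMap.rTensor ((U ⊗[k] U) ⊗[k] L)
      ((LinearMap.rTensor H (Coalgebra.comul (R := k))) ∘ₗ (Coalgebra.comul (R := k))))

/-- The variant `h ⊗ X̄ ↦ h⁽²⁾X̄₁ ⊗ h⁽¹⁾X̄₂ ⊗ h⁽³⁾ ▷ X̄₃`. -/
def leftAct3Swapped (incl : H →ₗ[k] U) (actL : H ⊗[k] L →ₗ[k] L) :
    H ⊗[k] ((U ⊗[k] U) ⊗[k] L) →ₗ[k] (U ⊗[k] U) ⊗[k] L :=
  (TensorProduct.map
      ((TensorProduct.map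
          ((LinearMap.mul' k U) ∘ₗ (LinearMap.rTensor U incl))
          ((LinearMap.mul' k U) ∘ₗ (LinearMap.rTensor U incl))) ∘ₗ
        (TensorProduct.tensorTensorTensorComm k H H U U).toLinearMap)
      actL) ∘ₗ
    (TensorProduct.tensorTensorTensorComm k (H ⊗[k] H) H (U ⊗[k] U) L).toLinearMap ∘ₗ
    (LinearMap.rTensor ((U ⊗[k] U) ⊗[k] L)
      ((LinearMap.rTensor H (TensorProduct.comm k H H).toLinearMap) ∘ₗ
        (LinearMap.rTensor H (Coalgebra.comul (R := k))) ∘ₗ (Coalgebra.comul (R := k))))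

/-- Right multiplication `h ⊗ X̄ ↦ X̄₁h⁽¹⁾ ⊗ X̄₂h⁽²⁾ ⊗ X̄₃`. -/
def rightAct2 (incl : H →ₗ[k] U) :
    H ⊗[k] ((U ⊗[k] U) ⊗[k] L) →ₗ[k] (U ⊗[k] U) ⊗[k] L :=
  (LinearMap.rTensor L
      ((TensorProduct.map
          ((LinearMap.mul' k U) ∘ₗ (TensorProduct.comm k U U).toLinearMap ∘ₗ
            (LinearMap.rTensor U incl))
          ((LinearMap.mul' k U) ∘ₗ (TensorProduct.comm k U U).toLinearMap ∘ₗ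
            (LinearMap.rTensor U incl))) ∘ₗ
        (TensorProduct.tensorTensorTensorComm k H H U U).toLinearMap)) ∘ₗ
    (TensorProduct.assoc k (H ⊗[k] H) (U ⊗[k] U) L).symm.toLinearMap ∘ₗ
    (LinearMap.rTensor ((U ⊗[k] U) ⊗[k] L) (Coalgebra.comul (R := k)))

/-!
By the cocycle condition the total twist `J = (Δ ⊗ id)(F̄) · ⁽³⁾F̄₁₂ = (id ⊗ Δ)(F̄) · F̄₂₃` can be
written in two ways. Let `s` and `t` exchange legs `1, 2` and legs `2, 3`. Since `R` intertwines
`Δ` and `Δᵒᵖ`, the first expression gives `R₁₂ J = s(J) · ⁽³⁾R̄₁₂` and the second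
`R₂₃ J = t(J) · R̄₂₃`. So the dynamical R-matrices are gauge transforms of `R₁₂` and `R₂₃` by one
invertible element, and the Yang–Baxter equation of `R` is transported because `sts = tst`.

For the equivariance, `F̄` intertwines `Δ` with itself and `R` intertwines `Δ` with `Δᵒᵖ`. The
action of `H` measures `L`, so equivariant elements compose and invert like morphisms.
-/

section Gauge

variable {M : Type*} [Monoid M]

theorem yangBaxter_of_gauge (s t : M →* M) {J x y X Y : M}
    (hJ : IsLeftRegular (s (t (s J)))) (hbraid : s (t (s J)) = t (s (t J)))
    (hx : x * J = s J * X) (hy : y * J = t J * Y)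
    (hyb : t (s y) * t x * y = s (t x) * s y * x) :
    t (s Y) * t X * Y = s (t X) * s Y * X := by
  have htx : t x * t J = t (s J) * t X := by simp only [← map_mul, hx]
  have hsy : s y * s J = s (t J) * s Y := by simp only [← map_mul, hy]
  have htsy : t (s y) * t (s J) = t (s (t J)) * t (s Y) := by simp only [← map_mul, hy]
  have hstx : s (t x) * s (t J) = s (t (s J)) * s (t X) := by simp only [← map_mul, hx]
  refine hJ ?_
  calc s (t (s J)) * (t (s Y) * t X * Y)
      = t (s (t J)) * t (s Y) * t X * Y := by rw [hbraid]; simp only [mul_assoc]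
    _ = t (s y) * (t x * (y * J)) := by
        rw [← htsy, mul_assoc (t (s y)), ← htx, hy]; simp only [mul_assoc]
    _ = s (t x) * (s y * (x * J)) := by simpa only [mul_assoc] using congr($hyb * J)
    _ = s (t (s J)) * s (t X) * s Y * X := by
        rw [← hstx, mul_assoc (s (t x)), ← hsy, hx]; simp only [mul_assoc]
    _ = s (t (s J)) * (s (t X) * s Y * X) := by simp only [mul_assoc]

end Gauge

section Intertwining

variable {k A B C : Type*} [CommSemiring k] [Semiring A] [Algebra k A] [Semiring B] [Algebra k B]
  [Semiring C] [Algebra k C]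

theorem tmul_one_mul_map_eq {f g : A →ₐ[k] B} {y : B} (h : ∀ a, y * f a = g a * y)
    (z : A ⊗[k] C) :
    (y ⊗ₜ[k] (1 : C)) * Algebra.TensorProduct.map f (AlgHom.id k C) z =
      Algebra.TensorProduct.map g (AlgHom.id k C) z * (y ⊗ₜ[k] (1 : C)) := by
  induction z with
  | zero => simp
  | tmul a c => simp [h]
  | add z w hz hw => simp only [map_add, mul_add, add_mul, hz, hw]

theorem one_tmul_mul_map_eq {f g : A →ₐ[k] B} {y : B} (h : ∀ a, y * f a = g a * y)
    (z : C ⊗[k] A) :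
    ((1 : C) ⊗ₜ[k] y) * Algebra.TensorProduct.map (AlgHom.id k C) f z =
      Algebra.TensorProduct.map (AlgHom.id k C) g z * ((1 : C) ⊗ₜ[k] y) := by
  induction z with
  | zero => simp
  | tmul c a => simp [h]
  | add z w hz hw => simp only [map_add, mul_add, add_mul, hz, hw]

end Intertwining

section Legs

variable (k : Type*) [CommSemiring k] (A L : Type*) [Semiring A] [Algebra k A]
  [Semiring L] [Algebra k L]

/-- The exchange of the first two legs, `F̄ ↦ F̄₂₁`. -/
def swapLegs : (A ⊗[k] A) ⊗[k] L →ₐ[k] (A ⊗[k] A) ⊗[k] L :=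
  Algebra.TensorProduct.map (Algebra.TensorProduct.comm k A A).toAlgHom (AlgHom.id k L)

/-- The exchange of legs `1` and `2` on `A ⊗ A ⊗ A ⊗ L`. -/
def swap12 : ((A ⊗[k] A) ⊗[k] A) ⊗[k] L →ₐ[k] ((A ⊗[k] A) ⊗[k] A) ⊗[k] L :=
  Algebra.TensorProduct.map
    (Algebra.TensorProduct.map (Algebra.TensorProduct.comm k A A).toAlgHom (AlgHom.id k A))
    (AlgHom.id k L)

/-- The exchange of legs `2` and `3` on `A ⊗ A ⊗ A ⊗ L`. -/
def swap23 : ((A ⊗[k] A) ⊗[k] A) ⊗[k] L →ₐ[k] ((A ⊗[k] A) ⊗[k] A) ⊗[k] L :=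
  Algebra.TensorProduct.map
    ((Algebra.TensorProduct.assoc k k k A A A).symm.toAlgHom.comp
      ((Algebra.TensorProduct.map (AlgHom.id k A)
        (Algebra.TensorProduct.comm k A A).toAlgHom).comp
          (Algebra.TensorProduct.assoc k k k A A A).toAlgHom))
    (AlgHom.id k L)

/-- The insertion `X̄ ↦ X̄₂₃`, as an algebra homomorphism. -/
def insert23 : (A ⊗[k] A) ⊗[k] L →ₐ[k] ((A ⊗[k] A) ⊗[k] A) ⊗[k] L :=
  Algebra.TensorProduct.map
    (Algebra.TensorProduct.map Algebra.TensorProduct.includeRight (AlgHom.id k A))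
    (AlgHom.id k L)

variable {k A L}

/-- The shifted insertion `X̄ ↦ ⁽³⁾X̄₁₂`, as an algebra homomorphism; the coaction is taken in the
form `L → A ⊗ L`, after embedding the coacting algebra in `A`. -/
def shiftedInsert12 (δ : L →ₐ[k] A ⊗[k] L) :
    (A ⊗[k] A) ⊗[k] L →ₐ[k] ((A ⊗[k] A) ⊗[k] A) ⊗[k] L :=
  (Algebra.TensorProduct.assoc k k k (A ⊗[k] A) A L).symm.toAlgHom.comp
    (Algebra.TensorProduct.map (AlgHom.id k (A ⊗[k] A)) δ)

theorem swap12_swap23_swap12 (X : ((A ⊗[k] A) ⊗[k] A) ⊗[k] L) :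
    swap12 k A L (swap23 k A L (swap12 k A L X)) =
      swap23 k A L (swap12 k A L (swap23 k A L X)) := by
  have h : (swap12 k A L).comp ((swap23 k A L).comp (swap12 k A L)) =
      (swap23 k A L).comp ((swap12 k A L).comp (swap23 k A L)) :=
    AlgHom.toLinearMap_injective (by ext; rfl)
  exact AlgHom.congr_fun h X

theorem swap12_shiftedInsert12 (δ : L →ₐ[k] A ⊗[k] L) (X : (A ⊗[k] A) ⊗[k] L) :
    swap12 k A L (shiftedInsert12 δ X) = shiftedInsert12 δ (swapLegs k A L X) := by
  have hperm (x : A ⊗[k] A) (z : A ⊗[k] L) :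
      swap12 k A L ((TensorProduct.assoc k (A ⊗[k] A) A L).symm (x ⊗ₜ[k] z)) =
        (TensorProduct.assoc k (A ⊗[k] A) A L).symm (TensorProduct.comm k A A x ⊗ₜ[k] z) := by
    induction z with
    | zero => simp
    | tmul a ℓ => rfl
    | add z w hz hw => simp only [tmul_add, map_add, hz, hw]
  induction X with
  | zero => simp
  | tmul x ℓ => exact hperm x (δ ℓ)
  | add X Y hX hY => simp only [map_add, hX, hY]

theorem swap23_insert23 (X : (A ⊗[k] A) ⊗[k] L) :
    swap23 k A L (insert23 k A L X) = insert23 k A L (swapLegs k A L X) := by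
  refine AlgHom.congr_fun (φ₁ := (swap23 k A L).comp (insert23 k A L))
    (φ₂ := (insert23 k A L).comp (swapLegs k A L)) ?_ X
  ext <;> simp [swap23, insert23, swapLegs]

theorem insert23_tmul_one (x : A ⊗[k] A) :
    insert23 k A L (x ⊗ₜ[k] (1 : L)) =
      (TensorProduct.assoc k A A A).symm ((1 : A) ⊗ₜ[k] x) ⊗ₜ[k] (1 : L) := by
  have h : Algebra.TensorProduct.map Algebra.TensorProduct.includeRight (AlgHom.id k A) =
      (Algebra.TensorProduct.assoc k k k A A A).symm.toAlgHom.comp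
        Algebra.TensorProduct.includeRight :=
    AlgHom.toLinearMap_injective (by ext; rfl)
  exact congr($(AlgHom.congr_fun h x) ⊗ₜ[k] (1 : L))

theorem swap23_swap12_insert23_tmul_one (x : A ⊗[k] A) :
    swap23 k A L (swap12 k A L (insert23 k A L (x ⊗ₜ[k] (1 : L)))) =
      (x ⊗ₜ[k] (1 : A)) ⊗ₜ[k] (1 : L) := by
  have h : ((swap23 k A L).comp ((swap12 k A L).comp (insert23 k A L))).comp
        Algebra.TensorProduct.includeLeft =
      Algebra.TensorProduct.includeLeft.comp Algebra.TensorProduct.includeLeft :=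
    AlgHom.toLinearMap_injective (by ext; rfl)
  exact AlgHom.congr_fun h x

theorem shiftedInsert12_tmul_one (δ : L →ₐ[k] A ⊗[k] L) (r : A ⊗[k] A) :
    shiftedInsert12 δ (r ⊗ₜ[k] (1 : L)) = (r ⊗ₜ[k] (1 : A)) ⊗ₜ[k] (1 : L) := by
  simp [shiftedInsert12, Algebra.TensorProduct.one_def]

/-- The element `F̄₂₁⁻¹ R F̄`, with `G` in the role of `F̄⁻¹`. -/
def twistedRMatrix (r : A ⊗[k] A) (F G : (A ⊗[k] A) ⊗[k] L) : (A ⊗[k] A) ⊗[k] L :=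
  swapLegs k A L G * (r ⊗ₜ[k] (1 : L)) * F

theorem swapLegs_mul_twistedRMatrix {r : A ⊗[k] A} {F G : (A ⊗[k] A) ⊗[k] L} (hFG : F * G = 1) :
    swapLegs k A L F * twistedRMatrix r F G = (r ⊗ₜ[k] (1 : L)) * F := by
  rw [twistedRMatrix, ← mul_assoc, ← mul_assoc, ← map_mul, hFG, map_one, one_mul]

end Legs

section Coproduct

-- Instance search on the fourfold tensor product fails at the default depth.
set_option maxSynthPendingDepth 3

variable (k : Type*) [CommSemiring k] (U L : Type*) [Semiring U] [Bialgebra k U]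
  [Semiring L] [Algebra k L]

/-- `Δ ⊗ id ⊗ id` on `U ⊗ U ⊗ L`. -/
def comul1 : (U ⊗[k] U) ⊗[k] L →ₐ[k] ((U ⊗[k] U) ⊗[k] U) ⊗[k] L :=
  Algebra.TensorProduct.map
    (Algebra.TensorProduct.map (Bialgebra.comulAlgHom k U) (AlgHom.id k U)) (AlgHom.id k L)

/-- `id ⊗ Δ ⊗ id` on `U ⊗ U ⊗ L`. -/
def comul2 : (U ⊗[k] U) ⊗[k] L →ₐ[k] ((U ⊗[k] U) ⊗[k] U) ⊗[k] L :=
  Algebra.TensorProduct.map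
    ((Algebra.TensorProduct.assoc k k k U U U).symm.toAlgHom.comp
      (Algebra.TensorProduct.map (AlgHom.id k U) (Bialgebra.comulAlgHom k U)))
    (AlgHom.id k L)

variable {k U L} {r : U ⊗[k] U}

theorem tmul_one_mul_comul1
    (hr : ∀ u, r * Bialgebra.comulAlgHom k U u =
      Algebra.TensorProduct.comm k U U (Bialgebra.comulAlgHom k U u) * r)
    (Z : (U ⊗[k] U) ⊗[k] L) :
    ((r ⊗ₜ[k] (1 : U)) ⊗ₜ[k] (1 : L)) * comul1 k U L Z =
      swap12 k U L (comul1 k U L Z) * ((r ⊗ₜ[k] (1 : U)) ⊗ₜ[k] (1 : L)) := by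
  have h : (swap12 k U L).comp (comul1 k U L) =
      Algebra.TensorProduct.map (Algebra.TensorProduct.map
        ((Algebra.TensorProduct.comm k U U).toAlgHom.comp (Bialgebra.comulAlgHom k U))
        (AlgHom.id k U)) (AlgHom.id k L) := by
    ext <;> simp [swap12, comul1]
  rw [← AlgHom.comp_apply, h]
  exact tmul_one_mul_map_eq (tmul_one_mul_map_eq hr) Z

theorem insert23_mul_comul2
    (hr : ∀ u, r * Bialgebra.comulAlgHom k U u =
      Algebra.TensorProduct.comm k U U (Bialgebra.comulAlgHom k U u) * r)
    (Z : (U ⊗[k] U) ⊗[k] L) :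
    insert23 k U L (r ⊗ₜ[k] (1 : L)) * comul2 k U L Z =
      swap23 k U L (comul2 k U L Z) * insert23 k U L (r ⊗ₜ[k] (1 : L)) := by
  let e := (Algebra.TensorProduct.assoc k k k U U U).symm
  have h : (swap23 k U L).comp (comul2 k U L) =
      Algebra.TensorProduct.map (e.toAlgHom.comp (Algebra.TensorProduct.map (AlgHom.id k U)
        ((Algebra.TensorProduct.comm k U U).toAlgHom.comp (Bialgebra.comulAlgHom k U))))
        (AlgHom.id k L) := by
    ext <;> simp [swap23, comul2, e]
  rw [← AlgHom.comp_apply, h, insert23_tmul_one]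
  refine tmul_one_mul_map_eq (fun z => ?_) Z
  exact ((map_mul e _ _).symm.trans (congrArg e (one_tmul_mul_map_eq
    (g := (Algebra.TensorProduct.comm k U U).toAlgHom.comp (Bialgebra.comulAlgHom k U))
    hr z))).trans (map_mul e _ _)

theorem yangBaxter_of_comul
    (hr : ∀ u, r * Bialgebra.comulAlgHom k U u =
      Algebra.TensorProduct.comm k U U (Bialgebra.comulAlgHom k U u) * r)
    (hΔr : comul1 k U L (r ⊗ₜ[k] (1 : L)) =
      swap23 k U L ((r ⊗ₜ[k] (1 : U)) ⊗ₜ[k] (1 : L)) * insert23 k U L (r ⊗ₜ[k] (1 : L))) :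
    swap23 k U L (swap12 k U L (insert23 k U L (r ⊗ₜ[k] (1 : L)))) *
        swap23 k U L ((r ⊗ₜ[k] (1 : U)) ⊗ₜ[k] (1 : L)) * insert23 k U L (r ⊗ₜ[k] (1 : L)) =
      swap12 k U L (swap23 k U L ((r ⊗ₜ[k] (1 : U)) ⊗ₜ[k] (1 : L))) *
        swap12 k U L (insert23 k U L (r ⊗ₜ[k] (1 : L))) *
          ((r ⊗ₜ[k] (1 : U)) ⊗ₜ[k] (1 : L)) := by
  rw [swap23_swap12_insert23_tmul_one, mul_assoc, ← hΔr, tmul_one_mul_comul1 hr, hΔr, map_mul]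

theorem dynamicalYangBaxter_twistedRMatrix
    (hr : ∀ u, r * Bialgebra.comulAlgHom k U u =
      Algebra.TensorProduct.comm k U U (Bialgebra.comulAlgHom k U u) * r)
    (hΔr : comul1 k U L (r ⊗ₜ[k] (1 : L)) =
      swap23 k U L ((r ⊗ₜ[k] (1 : U)) ⊗ₜ[k] (1 : L)) * insert23 k U L (r ⊗ₜ[k] (1 : L)))
    (δ : L →ₐ[k] U ⊗[k] L) {F G : (U ⊗[k] U) ⊗[k] L} (hFG : F * G = 1) (hGF : G * F = 1)
    (hF : comul1 k U L F * shiftedInsert12 δ F = comul2 k U L F * insert23 k U L F) :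
    swap23 k U L (swap12 k U L (insert23 k U L (twistedRMatrix r F G))) *
        swap23 k U L (shiftedInsert12 δ (twistedRMatrix r F G)) *
          insert23 k U L (twistedRMatrix r F G) =
      swap12 k U L (swap23 k U L (shiftedInsert12 δ (twistedRMatrix r F G))) *
        swap12 k U L (insert23 k U L (twistedRMatrix r F G)) *
          shiftedInsert12 δ (twistedRMatrix r F G) := by
  have hunit : IsUnit F := isUnit_iff_exists.mpr ⟨G, hFG, hGF⟩
  have hJunit : IsUnit (comul1 k U L F * shiftedInsert12 δ F) :=
    (hunit.map _).mul (hunit.map _)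
  have hx : ((r ⊗ₜ[k] (1 : U)) ⊗ₜ[k] (1 : L)) * (comul1 k U L F * shiftedInsert12 δ F) =
      swap12 k U L (comul1 k U L F * shiftedInsert12 δ F) *
        shiftedInsert12 δ (twistedRMatrix r F G) := by
    rw [← mul_assoc, tmul_one_mul_comul1 hr, mul_assoc, ← shiftedInsert12_tmul_one δ, ← map_mul,
      ← swapLegs_mul_twistedRMatrix hFG, map_mul, ← swap12_shiftedInsert12, map_mul, mul_assoc]
  have hy : insert23 k U L (r ⊗ₜ[k] (1 : L)) * (comul1 k U L F * shiftedInsert12 δ F) =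
      swap23 k U L (comul1 k U L F * shiftedInsert12 δ F) *
        insert23 k U L (twistedRMatrix r F G) := by
    rw [hF, ← mul_assoc, insert23_mul_comul2 hr, mul_assoc, ← map_mul,
      ← swapLegs_mul_twistedRMatrix hFG, map_mul, ← swap23_insert23, map_mul, mul_assoc]
  exact yangBaxter_of_gauge (swap12 k U L).toMonoidHom (swap23 k U L).toMonoidHom
    (((hJunit.map _).map _).map _).isRegular.left (swap12_swap23_swap12 _) hx hy
    (yangBaxter_of_comul hr hΔr)

end Coproduct

section Measuring

open WithConv
open scoped Coalgebra

variable {k : Type*} [CommSemiring k]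

section Orbit

variable {C L : Type*} [AddCommMonoid C] [Module k C] [AddCommMonoid L] [Module k L]

/-- The orbit map `c ↦ c ▷ ℓ` of `ℓ` under `act`, as an element of the convolution algebra. -/
def orbit (act : C ⊗[k] L →ₗ[k] L) (ℓ : L) : WithConv (C →ₗ[k] L) :=
  toConv (act ∘ₗ (TensorProduct.mk k C L).flip ℓ)

theorem orbit_apply (act : C ⊗[k] L →ₗ[k] L) (ℓ : L) (c : C) :
    orbit act ℓ c = act (c ⊗ₜ ℓ) := rfl

theorem orbit_zero (act : C ⊗[k] L →ₗ[k] L) : orbit act 0 = 0 := by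
  rw [orbit, map_zero, comp_zero, toConv_zero]

theorem orbit_add (act : C ⊗[k] L →ₗ[k] L) (ℓ m : L) :
    orbit act (ℓ + m) = orbit act ℓ + orbit act m := by
  rw [orbit, map_add, comp_add, toConv_add, orbit, orbit]

end Orbit

/-- `act` makes the coalgebra `C` measure the algebra `L`: `c ▷ 1 = ε(c) 1` and
`c ▷ ℓm = (c⁽¹⁾ ▷ ℓ)(c⁽²⁾ ▷ m)`. -/
structure IsMeasuring {C L : Type*} [AddCommMonoid C] [Module k C] [Coalgebra k C]
    [Semiring L] [Algebra k L] (act : C ⊗[k] L →ₗ[k] L) : Prop where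
  orbit_one : orbit act 1 = 1
  orbit_mul (ℓ m : L) : orbit act (ℓ * m) = orbit act ℓ * orbit act m

theorem orbit_mul_of_act_mul {C L : Type*} [AddCommMonoid C] [Module k C] [Coalgebra k C]
    [Semiring L] [Algebra k L] {act : C ⊗[k] L →ₗ[k] L} {ℓ m : L}
    (h : ∀ c, act (c ⊗ₜ[k] (ℓ * m)) = LinearMap.mul' k L (TensorProduct.map act act
      (TensorProduct.tensorTensorTensorComm k C C L L (Coalgebra.comul c ⊗ₜ[k] (ℓ ⊗ₜ[k] m))))) :
    orbit act (ℓ * m) = orbit act ℓ * orbit act m := by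
  ext c
  rw [orbit_apply, h, (ℛ k c).convMul_apply]
  simp [← (ℛ k c).eq, sum_tmul, orbit_apply]

theorem IsMeasuring.of_hopfAlgebra {H L : Type*} [Semiring H] [HopfAlgebra k H]
    [Semiring L] [Algebra k L] {act : H ⊗[k] L →ₗ[k] L} (one_act : ∀ ℓ, act ((1 : H) ⊗ₜ[k] ℓ) = ℓ)
    (mul_act : ∀ (x y : H) (ℓ : L), act ((x * y) ⊗ₜ[k] ℓ) = act (x ⊗ₜ[k] act (y ⊗ₜ[k] ℓ)))
    (act_mul : ∀ ℓ m, orbit act (ℓ * m) = orbit act ℓ * orbit act m) : IsMeasuring act := by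
  refine ⟨?_, act_mul⟩
  -- By `h ▷ (1 · ℓ) = (h⁽¹⁾ ▷ 1)(h⁽²⁾ ▷ ℓ)`, the orbit of `1` is absorbed by the representation
  -- `ρ`, which has the convolution inverse `ρ ∘ S`; hence that orbit is the counit.
  let ρ : H →ₐ[k] Module.End k L := AlgHom.ofLinearMap (TensorProduct.curry act)
    (LinearMap.ext one_act) fun x y => LinearMap.ext (mul_act x y)
  let unitOrbit : WithConv (H →ₗ[k] Module.End k L) :=
    toConv (LinearMap.mul k L ∘ₗ (orbit act 1).ofConv)
  have hρ_inv : toConv ρ.toLinearMap * toConv (ρ.toLinearMap ∘ₗ HopfAlgebra.antipode k) = 1 := by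
    ext h : 2
    rw [(ℛ k h).convMul_apply]
    simpa using congr(ρ $(HopfAlgebra.sum_mul_antipode_eq_algebraMap_counit (ℛ k h)))
  have habsorb : unitOrbit * toConv ρ.toLinearMap = toConv ρ.toLinearMap := by
    ext h ℓ
    have := congr($(act_mul 1 ℓ) h)
    rw [(ℛ k h).convMul_apply, one_mul] at this
    rw [(ℛ k h).convMul_apply, LinearMap.sum_apply]
    exact this.symm
  have hunit : unitOrbit = 1 := by
    rw [← mul_one unitOrbit, ← hρ_inv, ← mul_assoc, habsorb]
  ext h
  have := congr($hunit h 1)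
  simpa [unitOrbit, Algebra.algebraMap_eq_smul_one] using this

end Measuring

section Diagonal

open WithConv
open scoped Coalgebra

variable {k C A B L : Type*} [CommSemiring k] [AddCommMonoid C] [Module k C] [Coalgebra k C]
  [Semiring A] [Algebra k A] [Semiring B] [Algebra k B] [Semiring L] [Algebra k L]

/-- The diagonal action `c ⊗ (x ⊗ ℓ) ↦ φ(c⁽¹⁾)x ⊗ c⁽²⁾ ▷ ℓ` of a coalgebra on `A ⊗ L`. -/
def diagAct (φ : C →ₗ[k] A) (act : C ⊗[k] L →ₗ[k] L) : C ⊗[k] (A ⊗[k] L) →ₗ[k] A ⊗[k] L :=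
  TensorProduct.map (LinearMap.mul' k A ∘ₗ LinearMap.rTensor A φ) act ∘ₗ
    (TensorProduct.tensorTensorTensorComm k C C A L).toLinearMap ∘ₗ
    LinearMap.rTensor (A ⊗[k] L) Coalgebra.comul

theorem diagAct_tmul (φ : C →ₗ[k] A) (act : C ⊗[k] L →ₗ[k] L) {c : C} {ι : Type*}
    (𝓡 : Coalgebra.Repr k c ι) (x : A) (ℓ : L) :
    diagAct φ act (c ⊗ₜ[k] (x ⊗ₜ[k] ℓ)) =
      ∑ i ∈ 𝓡.index, (φ (𝓡.left i) * x) ⊗ₜ[k] act (𝓡.right i ⊗ₜ[k] ℓ) := by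
  simp [diagAct, ← 𝓡.eq, sum_tmul]

theorem diagAct_map (φ : C →ₗ[k] A) (act : C ⊗[k] L →ₗ[k] L) (f : A →ₐ[k] B) (c : C)
    (X : A ⊗[k] L) :
    diagAct (f.toLinearMap ∘ₗ φ) act (c ⊗ₜ[k] Algebra.TensorProduct.map f (AlgHom.id k L) X) =
      Algebra.TensorProduct.map f (AlgHom.id k L) (diagAct φ act (c ⊗ₜ[k] X)) := by
  induction X with
  | zero => simp
  | tmul x ℓ => simp [diagAct_tmul _ act (ℛ k c)]
  | add X Y hX hY => simp only [tmul_add, map_add, hX, hY]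

theorem orbit_diagAct_tmul (φ : C →ₗ[k] A) (act : C ⊗[k] L →ₗ[k] L) (x : A) (ℓ : L) :
    orbit (diagAct φ act) (x ⊗ₜ[k] ℓ) =
      toConv ((TensorProduct.mk k A L).flip 1 ∘ₗ LinearMap.mulRight k x ∘ₗ φ) *
        toConv (TensorProduct.mk k A L 1 ∘ₗ (orbit act ℓ).ofConv) := by
  ext c
  simp [orbit_apply, diagAct_tmul φ act (ℛ k c), (ℛ k c).convMul_apply]

theorem orbit_diagAct_mul_tmul (φ : C →ₗ[k] A) {act : C ⊗[k] L →ₗ[k] L} (hact : IsMeasuring act)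
    (X : A ⊗[k] L) (y : A) (m : L) :
    orbit (diagAct φ act) (X * (y ⊗ₜ[k] m)) =
      orbit (diagAct φ act) X * toConv (TensorProduct.mk k A L y ∘ₗ (orbit act m).ofConv) := by
  have hright (ℓ : L) : toConv (TensorProduct.mk k A L 1 ∘ₗ (orbit act ℓ).ofConv) *
      toConv (TensorProduct.mk k A L y ∘ₗ (orbit act m).ofConv) =
        toConv (TensorProduct.mk k A L y ∘ₗ (orbit act (ℓ * m)).ofConv) := by
    ext c
    simp [hact.orbit_mul, (ℛ k c).convMul_apply]
  have hleft (x : A) (ℓ : L) :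
      toConv ((TensorProduct.mk k A L).flip 1 ∘ₗ LinearMap.mulRight k x ∘ₗ φ) *
          toConv (TensorProduct.mk k A L y ∘ₗ (orbit act (ℓ * m)).ofConv) =
        orbit (diagAct φ act) ((x * y) ⊗ₜ[k] (ℓ * m)) := by
    ext c
    simp [orbit_apply, diagAct_tmul φ act (ℛ k c), (ℛ k c).convMul_apply, mul_assoc]
  induction X with
  | zero => rw [zero_mul, orbit_zero, zero_mul]
  | tmul x ℓ =>
    rw [Algebra.TensorProduct.tmul_mul_tmul, orbit_diagAct_tmul φ act x ℓ, mul_assoc, hright,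
      hleft]
  | add X X' hX hX' =>
    rw [add_mul, orbit_add, orbit_add, hX, hX', add_mul]

/-- `X` intertwines `φ` and `ψ` for the diagonal actions: `ψ(c⁽¹⁾)X₁ ⊗ c⁽²⁾ ▷ X₂ = X₁φ(c) ⊗ X₂`. -/
def IsEquivariant (act : C ⊗[k] L →ₗ[k] L) (φ ψ : C →ₗ[k] A) (X : A ⊗[k] L) : Prop :=
  ∀ c, diagAct ψ act (c ⊗ₜ[k] X) = X * (φ c ⊗ₜ[k] (1 : L))

variable {act : C ⊗[k] L →ₗ[k] L} {φ ψ χ : C →ₗ[k] A} {X Y : A ⊗[k] L}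

theorem IsMeasuring.diagAct_tmul_one (hact : IsMeasuring act) (φ : C →ₗ[k] A) (c : C) (x : A) :
    diagAct φ act (c ⊗ₜ[k] (x ⊗ₜ[k] (1 : L))) = (φ c * x) ⊗ₜ[k] (1 : L) := by
  have hone : toConv (TensorProduct.mk k A L 1 ∘ₗ (orbit act 1).ofConv) = 1 := by
    ext c
    simp [hact.orbit_one, Algebra.algebraMap_eq_smul_one, Algebra.TensorProduct.one_def]
  rw [← orbit_apply, orbit_diagAct_tmul, hone, mul_one]
  rfl

theorem IsEquivariant.diagAct_mul (hact : IsMeasuring act) (hX : IsEquivariant act φ ψ X) (c : C)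
    (Y : A ⊗[k] L) :
    diagAct ψ act (c ⊗ₜ[k] (X * Y)) = X * diagAct φ act (c ⊗ₜ[k] Y) := by
  induction Y with
  | zero => simp
  | tmul y m =>
    rw [← orbit_apply, orbit_diagAct_mul_tmul ψ hact, (ℛ k c).convMul_apply,
      diagAct_tmul φ act (ℛ k c), Finset.mul_sum]
    refine Finset.sum_congr rfl fun i _ => ?_
    rw [orbit_apply, hX, mul_assoc]
    simp [orbit_apply]
  | add Y Y' hY hY' => simp only [mul_add, tmul_add, map_add, hY, hY']

theorem IsEquivariant.mul (hact : IsMeasuring act) (hX : IsEquivariant act ψ χ X)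
    (hY : IsEquivariant act φ ψ Y) : IsEquivariant act φ χ (X * Y) := fun c => by
  rw [hX.diagAct_mul hact, hY c, mul_assoc]

theorem IsEquivariant.of_mul_eq_one (hact : IsMeasuring act) (hX : IsEquivariant act φ ψ X)
    (hXY : X * Y = 1) (hYX : Y * X = 1) : IsEquivariant act ψ φ Y := fun c =>
  calc diagAct φ act (c ⊗ₜ[k] Y)
      = Y * (X * diagAct φ act (c ⊗ₜ[k] Y)) := by rw [← mul_assoc, hYX, one_mul]
    _ = Y * diagAct ψ act (c ⊗ₜ[k] (1 : A ⊗[k] L)) := by rw [← hX.diagAct_mul hact, hXY]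
    _ = Y * (ψ c ⊗ₜ[k] (1 : L)) := by
        rw [Algebra.TensorProduct.one_def, hact.diagAct_tmul_one, mul_one]

theorem IsEquivariant.tmul_one (hact : IsMeasuring act) {x : A} (hx : ∀ c, ψ c * x = x * φ c) :
    IsEquivariant act φ ψ (x ⊗ₜ[k] (1 : L)) := fun c => by
  rw [hact.diagAct_tmul_one, hx, Algebra.TensorProduct.tmul_mul_tmul, one_mul]

theorem IsEquivariant.map (hX : IsEquivariant act φ ψ X) (f : A →ₐ[k] B) :
    IsEquivariant act (f.toLinearMap ∘ₗ φ) (f.toLinearMap ∘ₗ ψ)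
      (Algebra.TensorProduct.map f (AlgHom.id k L) X) := fun c => by
  rw [diagAct_map, hX c, map_mul]
  simp

theorem IsEquivariant.twistedRMatrix {F G : (A ⊗[k] A) ⊗[k] L} {r : A ⊗[k] A}
    {φ : C →ₗ[k] A ⊗[k] A} (hact : IsMeasuring act)
    (hF : IsEquivariant act φ φ F) (hFG : F * G = 1) (hGF : G * F = 1)
    (hr : ∀ c, r * φ c = TensorProduct.comm k A A (φ c) * r) :
    IsEquivariant act φ ((TensorProduct.comm k A A).toLinearMap ∘ₗ φ) (twistedRMatrix r F G) :=
  (((hF.of_mul_eq_one hact hFG hGF).map (Algebra.TensorProduct.comm k A A).toAlgHom).mul hact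
    (.tmul_one hact fun c => (hr c).symm)).mul hact hF

end Diagonal

section DynamicalTwist

open scoped Coalgebra

variable {k}

theorem diagAct_map_comp (incl : H →ₗ[k] U) (actL : H ⊗[k] L →ₗ[k] L) (f : H →ₗ[k] H ⊗[k] H) :
    diagAct (TensorProduct.map incl incl ∘ₗ f) actL =
      (TensorProduct.map
          ((TensorProduct.map
              ((LinearMap.mul' k U) ∘ₗ (LinearMap.rTensor U incl))
              ((LinearMap.mul' k U) ∘ₗ (LinearMap.rTensor U incl))) ∘ₗ
            (TensorProduct.tensorTensorTensorComm k H H U U).toLinearMap)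
          actL) ∘ₗ
        (TensorProduct.tensorTensorTensorComm k (H ⊗[k] H) H (U ⊗[k] U) L).toLinearMap ∘ₗ
        (LinearMap.rTensor ((U ⊗[k] U) ⊗[k] L) (LinearMap.rTensor H f ∘ₗ Coalgebra.comul)) := by
  have hmul : TensorProduct.map (LinearMap.mul' k U ∘ₗ LinearMap.rTensor U incl)
        (LinearMap.mul' k U ∘ₗ LinearMap.rTensor U incl) ∘ₗ
          (TensorProduct.tensorTensorTensorComm k H H U U).toLinearMap =
      LinearMap.mul' k (U ⊗[k] U) ∘ₗ
        LinearMap.rTensor (U ⊗[k] U) (TensorProduct.map incl incl) := by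
    ext; simp
  rw [hmul]
  ext h x y ℓ
  simp [diagAct, ← (ℛ k h).eq, sum_tmul]

theorem leftAct3_eq_diagAct (incl : H →ₗ[k] U) (actL : H ⊗[k] L →ₗ[k] L) :
    leftAct3 k incl actL = diagAct (TensorProduct.map incl incl ∘ₗ Coalgebra.comul) actL :=
  (diagAct_map_comp incl actL Coalgebra.comul).symm

theorem leftAct3Swapped_eq_diagAct (incl : H →ₗ[k] U) (actL : H ⊗[k] L →ₗ[k] L) :
    leftAct3Swapped k incl actL = diagAct (TensorProduct.map incl incl ∘ₗ
      (TensorProduct.comm k H H).toLinearMap ∘ₗ Coalgebra.comul) actL := by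
  rw [diagAct_map_comp, rTensor_comp H, comp_assoc, leftAct3Swapped]

theorem rightAct2_apply (incl : H →ₐ[k] U) (h : H) (X : (U ⊗[k] U) ⊗[k] L) :
    rightAct2 k incl.toLinearMap (h ⊗ₜ[k] X) =
      X * (TensorProduct.map incl.toLinearMap incl.toLinearMap (Coalgebra.comul (R := k) h)
        ⊗ₜ[k] (1 : L)) := by
  have hmul (z : H ⊗[k] H) (x : U ⊗[k] U) : TensorProduct.map
        ((LinearMap.mul' k U) ∘ₗ (TensorProduct.comm k U U).toLinearMap ∘ₗ
            (LinearMap.rTensor U incl.toLinearMap))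
        ((LinearMap.mul' k U) ∘ₗ (TensorProduct.comm k U U).toLinearMap ∘ₗ
            (LinearMap.rTensor U incl.toLinearMap))
        (TensorProduct.tensorTensorTensorComm k H H U U (z ⊗ₜ[k] x)) =
      x * TensorProduct.map incl.toLinearMap incl.toLinearMap z := by
    induction z with
    | zero => simp
    | add z w hz hw => simp only [add_tmul, map_add, mul_add, hz, hw]
    | tmul a b =>
      induction x with
      | zero => simp
      | add x y hx hy => simp only [tmul_add, map_add, add_mul, hx, hy]
      | tmul x y => simp
  induction X with
  | zero => simp
  | tmul x ℓ => simpa [rightAct2] using congr($(hmul (Coalgebra.comul h) x) ⊗ₜ[k] ℓ)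
  | add X Y hX hY => simp only [tmul_add, map_add, add_mul, hX, hY]

theorem emb23_eq (X : (U ⊗[k] U) ⊗[k] L) : emb23 k X = insert23 k U L X := rfl

theorem emb13_eq (X : (U ⊗[k] U) ⊗[k] L) :
    emb13 k X = swap12 k U L (insert23 k U L X) := by
  refine LinearMap.congr_fun (f := emb13 k)
    (g := ((swap12 k U L).comp (insert23 k U L)).toLinearMap) ?_ X
  ext; rfl

theorem emb12_eq (X : (U ⊗[k] U) ⊗[k] L) :
    emb12 k X = swap23 k U L (swap12 k U L (insert23 k U L X)) := by
  refine LinearMap.congr_fun (f := emb12 k)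
    (g := ((swap23 k U L).comp ((swap12 k U L).comp (insert23 k U L))).toLinearMap) ?_ X
  ext; rfl

theorem coact3of12_eq (incl : H →ₐ[k] U) (δ : L →ₐ[k] H ⊗[k] L) (X : (U ⊗[k] U) ⊗[k] L) :
    coact3of12 k incl.toLinearMap δ.toLinearMap X =
      shiftedInsert12 ((Algebra.TensorProduct.map incl (AlgHom.id k L)).comp δ) X := by
  refine LinearMap.congr_fun (f := coact3of12 k incl.toLinearMap δ.toLinearMap)
    (g := (shiftedInsert12 ((Algebra.TensorProduct.map incl (AlgHom.id k L)).comp δ)).toLinearMap)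
    ?_ X
  ext; rfl

theorem coact2of13_eq (incl : H →ₗ[k] U) (δ : L →ₗ[k] H ⊗[k] L) (X : (U ⊗[k] U) ⊗[k] L) :
    coact2of13 k incl δ X = swap23 k U L (coact3of12 k incl δ X) := rfl

theorem coact1of23_eq (incl : H →ₗ[k] U) (δ : L →ₗ[k] H ⊗[k] L) (X : (U ⊗[k] U) ⊗[k] L) :
    coact1of23 k incl δ X = swap12 k U L (swap23 k U L (coact3of12 k incl δ X)) := by
  rw [coact1of23, rTensor_comp]
  rfl

theorem comul1_tmul_one {r : U ⊗[k] U}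
    (hr : LinearMap.rTensor U (Coalgebra.comul (R := k)) r =
      rot3 k U U U (r ⊗ₜ[k] (1 : U)) * (TensorProduct.assoc k U U U).symm ((1 : U) ⊗ₜ[k] r)) :
    comul1 k U L (r ⊗ₜ[k] (1 : L)) =
      swap23 k U L ((r ⊗ₜ[k] (1 : U)) ⊗ₜ[k] (1 : L)) * insert23 k U L (r ⊗ₜ[k] (1 : L)) := by
  rw [insert23_tmul_one]
  change LinearMap.rTensor U Coalgebra.comul r ⊗ₜ[k] (1 : L) =
    (rot3 k U U U (r ⊗ₜ[k] (1 : U)) ⊗ₜ[k] (1 : L)) * _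
  rw [hr, Algebra.TensorProduct.tmul_mul_tmul, one_mul]

theorem equivariant_twistedRMatrix (incl : H →ₐ[k] U)
    (incl_comul : Coalgebra.comul ∘ₗ incl.toLinearMap =
      TensorProduct.map incl.toLinearMap incl.toLinearMap ∘ₗ Coalgebra.comul)
    {r : U ⊗[k] U}
    (hr : ∀ u : U, r * Coalgebra.comul u = TensorProduct.comm k U U (Coalgebra.comul u) * r)
    {actL : H ⊗[k] L →ₗ[k] L} (hact : IsMeasuring actL)
    {F Finv : (U ⊗[k] U) ⊗[k] L} (hF_inv : F * Finv = 1 ∧ Finv * F = 1)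
    (hF : ∀ h, leftAct3 k incl.toLinearMap actL (h ⊗ₜ[k] F) =
      rightAct2 k incl.toLinearMap (h ⊗ₜ[k] F)) (h : H) :
    leftAct3Swapped k incl.toLinearMap actL (h ⊗ₜ[k] twistedRMatrix r F Finv) =
      rightAct2 k incl.toLinearMap (h ⊗ₜ[k] twistedRMatrix r F Finv) := by
  let φ : H →ₗ[k] U ⊗[k] U :=
    TensorProduct.map incl.toLinearMap incl.toLinearMap ∘ₗ Coalgebra.comul
  have hφ (h : H) : φ h = Coalgebra.comul (incl h) := (LinearMap.congr_fun incl_comul h).symm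
  have hcomm : TensorProduct.map incl.toLinearMap incl.toLinearMap ∘ₗ
      (TensorProduct.comm k H H).toLinearMap ∘ₗ Coalgebra.comul =
        (TensorProduct.comm k U U).toLinearMap ∘ₗ φ := by
    rw [← comp_assoc, TensorProduct.map_comp_comm_eq, comp_assoc]
  have hFφ : IsEquivariant actL φ φ F := fun h => by
    rw [← leftAct3_eq_diagAct, hF, rightAct2_apply]
    rfl
  rw [leftAct3Swapped_eq_diagAct, hcomm, rightAct2_apply]
  exact hFφ.twistedRMatrix hact hF_inv.1 hF_inv.2 (fun c => by rw [hφ, hr]) h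

end DynamicalTwist

theorem statement17_general (incl : H →ₐ[k] U)
    (incl_comul : Coalgebra.comul ∘ₗ incl.toLinearMap =
      TensorProduct.map incl.toLinearMap incl.toLinearMap ∘ₗ Coalgebra.comul)
    (r : U ⊗[k] U)
    (hr1 : LinearMap.rTensor U (Coalgebra.comul (R := k)) r
      = (rot3 k U U U (r ⊗ₜ[k] (1 : U))) * ((TensorProduct.assoc k U U U).symm ((1 : U) ⊗ₜ[k] r)))
    (hr3 : ∀ u : U, r * Coalgebra.comul u = TensorProduct.comm k U U (Coalgebra.comul u) * r)
    (actL : H ⊗[k] L →ₗ[k] L) (hact : IsMeasuring actL) (δ : L →ₐ[k] H ⊗[k] L)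
    (F Finv : (U ⊗[k] U) ⊗[k] L) (hF_inv : F * Finv = 1 ∧ Finv * F = 1)
    (hF_equiv : (leftAct3 k incl.toLinearMap actL) ∘ₗ
        ((TensorProduct.mk k H ((U ⊗[k] U) ⊗[k] L)).flip F)
      = (rightAct2 k (L := L) incl.toLinearMap) ∘ₗ
          ((TensorProduct.mk k H ((U ⊗[k] U) ⊗[k] L)).flip F))
    (hF_cocycle :
      ((LinearMap.rTensor L (LinearMap.rTensor U (Coalgebra.comul (R := k)))) F) *
          ((coact3of12 k incl.toLinearMap δ.toLinearMap) F)
        = ((LinearMap.rTensor L ((TensorProduct.assoc k U U U).symm.toLinearMap ∘ₗ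
              (LinearMap.lTensor U (Coalgebra.comul (R := k))))) F) *
            ((emb23 k) F)) :
    let Rbar := twistedRMatrix r F Finv
    (leftAct3Swapped k incl.toLinearMap actL) ∘ₗ
          ((TensorProduct.mk k H ((U ⊗[k] U) ⊗[k] L)).flip Rbar)
        = (rightAct2 k (L := L) incl.toLinearMap) ∘ₗ
            ((TensorProduct.mk k H ((U ⊗[k] U) ⊗[k] L)).flip Rbar) ∧
      (emb12 k Rbar) * ((coact2of13 k incl.toLinearMap δ.toLinearMap) Rbar) * (emb23 k Rbar)
        = ((coact1of23 k incl.toLinearMap δ.toLinearMap) Rbar) * (emb13 k Rbar) *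
            ((coact3of12 k incl.toLinearMap δ.toLinearMap) Rbar) := by
  refine ⟨LinearMap.ext fun h => equivariant_twistedRMatrix incl incl_comul hr3 hact hF_inv
    (LinearMap.congr_fun hF_equiv) h, ?_⟩
  rw [coact3of12_eq] at hF_cocycle
  rw [emb12_eq, emb13_eq, emb23_eq, coact2of13_eq, coact1of23_eq, coact3of12_eq]
  exact dynamicalYangBaxter_twistedRMatrix hr3 (comul1_tmul_one hr1) _ hF_inv.1 hF_inv.2 hF_cocycle

theorem statement17
    -- `H` is a Hopf subalgebra of `U`:
    (incl : H →ₐ[k] U) (hincl : Function.Injective incl)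
    (incl_comul : (Coalgebra.comul (R := k)) ∘ₗ incl.toLinearMap
      = (TensorProduct.map incl.toLinearMap incl.toLinearMap) ∘ₗ (Coalgebra.comul (R := k)))
    (incl_counit : (Coalgebra.counit (R := k) (A := U)) ∘ₗ incl.toLinearMap
      = Coalgebra.counit (R := k) (A := H))
    -- `U` is quasitriangular with R-matrix `r`:
    (r rinv : U ⊗[k] U) (hr_inv : r * rinv = 1 ∧ rinv * r = 1)
    (hr1 : LinearMap.rTensor U (Coalgebra.comul (R := k)) r
      = (rot3 k U U U (r ⊗ₜ[k] (1 : U))) * ((TensorProduct.assoc k U U U).symm ((1 : U) ⊗ₜ[k] r)))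
    (hr2 : LinearMap.lTensor U (Coalgebra.comul (R := k)) r
      = (TensorProduct.assoc k U U U)
          ((rot3 k U U U (r ⊗ₜ[k] (1 : U))) * (r ⊗ₜ[k] (1 : U))))
    (hr3 : ∀ u : U, r * (Coalgebra.comul (R := k) u)
      = (TensorProduct.comm k U U (Coalgebra.comul (R := k) u)) * r)
    -- `L` is a base algebra over `H` (module algebra, comodule algebra, conditions):
    (actL : H ⊗[k] L →ₗ[k] L) (δ : L →ₗ[k] H ⊗[k] L)
    (actL_one : ∀ ℓ : L, actL ((1 : H) ⊗ₜ[k] ℓ) = ℓ)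
    (actL_mul : ∀ (x y : H) (ℓ : L), actL ((x * y) ⊗ₜ[k] ℓ) = actL (x ⊗ₜ[k] actL (y ⊗ₜ[k] ℓ)))
    (actL_alg : ∀ (h : H) (ℓ₁ ℓ₂ : L),
      actL (h ⊗ₜ[k] (ℓ₁ * ℓ₂))
        = (LinearMap.mul' k L) ((TensorProduct.map actL actL)
            ((TensorProduct.tensorTensorTensorComm k H H L L)
              ((Coalgebra.comul (R := k) h) ⊗ₜ[k] (ℓ₁ ⊗ₜ[k] ℓ₂)))))
    (δ_alg : ∀ ℓ₁ ℓ₂ : L, δ (ℓ₁ * ℓ₂) = δ ℓ₁ * δ ℓ₂) (δ_one : δ (1 : L) = 1)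
    (δ_coassoc : (LinearMap.rTensor L (Coalgebra.comul (R := k))) ∘ₗ δ
      = (TensorProduct.assoc k H H L).symm.toLinearMap ∘ₗ (LinearMap.lTensor H δ) ∘ₗ δ)
    (δ_counit : (TensorProduct.lid k L).toLinearMap ∘ₗ
      (LinearMap.rTensor L (Coalgebra.counit (R := k))) ∘ₗ δ = LinearMap.id)
    (hbase1 : (LinearMap.rTensor L (LinearMap.mul' k H)) ∘ₗ (rot3 k H L H) ∘ₗ
        (LinearMap.rTensor H δ) ∘ₗ (LinearMap.rTensor H actL) ∘ₗ (rot3 k H H L) ∘ₗ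
        (LinearMap.rTensor L (Coalgebra.comul (R := k)))
      = (TensorProduct.map (LinearMap.mul' k H) actL) ∘ₗ
          (TensorProduct.tensorTensorTensorComm k H H H L).toLinearMap ∘ₗ
          (TensorProduct.map (Coalgebra.comul (R := k)) δ))
    (hbase2 : LinearMap.mul' k L
      = (LinearMap.mul' k L) ∘ₗ (LinearMap.rTensor L actL) ∘ₗ (rot3 k H L L) ∘ₗ
          (LinearMap.rTensor L δ))
    -- `F̄` is a universal dynamical twist:
    (F Finv : (U ⊗[k] U) ⊗[k] L) (hF_inv : F * Finv = 1 ∧ Finv * F = 1)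
    (hF_equiv : (leftAct3 k incl.toLinearMap actL) ∘ₗ
        ((TensorProduct.mk k H ((U ⊗[k] U) ⊗[k] L)).flip F)
      = (rightAct2 k (L := L) incl.toLinearMap) ∘ₗ
          ((TensorProduct.mk k H ((U ⊗[k] U) ⊗[k] L)).flip F))
    (hF_cocycle :
      ((LinearMap.rTensor L (LinearMap.rTensor U (Coalgebra.comul (R := k)))) F) *
          ((coact3of12 k incl.toLinearMap δ) F)
        = ((LinearMap.rTensor L ((TensorProduct.assoc k U U U).symm.toLinearMap ∘ₗ
              (LinearMap.lTensor U (Coalgebra.comul (R := k))))) F) *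
            ((emb23 k) F))
    (hF_norm1 : (LinearMap.rTensor L ((TensorProduct.lid k U).toLinearMap ∘ₗ
        (LinearMap.rTensor U (Coalgebra.counit (R := k))))) F = 1)
    (hF_norm2 : (LinearMap.rTensor L ((TensorProduct.rid k U).toLinearMap ∘ₗ
        (LinearMap.lTensor U (Coalgebra.counit (R := k))))) F = 1) :
    -- then `R̄ := F̄₂₁⁻¹ r F̄` is a universal quantum dynamical R-matrix:
    ∀ Rbar : (U ⊗[k] U) ⊗[k] L,
      Rbar = ((LinearMap.rTensor L (TensorProduct.comm k U U).toLinearMap) Finv) *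
          (r ⊗ₜ[k] (1 : L)) * F →
      -- equivariance:
      ((leftAct3Swapped k incl.toLinearMap actL) ∘ₗ
          ((TensorProduct.mk k H ((U ⊗[k] U) ⊗[k] L)).flip Rbar)
        = (rightAct2 k (L := L) incl.toLinearMap) ∘ₗ
            ((TensorProduct.mk k H ((U ⊗[k] U) ⊗[k] L)).flip Rbar)) ∧
      -- quantum dynamical Yang–Baxter equation:
      ((emb12 k Rbar) * ((coact2of13 k incl.toLinearMap δ) Rbar) * (emb23 k Rbar)
        = ((coact1of23 k incl.toLinearMap δ) Rbar) * (emb13 k Rbar) *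
            ((coact3of12 k incl.toLinearMap δ) Rbar)) := by
  rintro _ rfl
  exact statement17_general k incl incl_comul r hr1 hr3 actL
    (.of_hopfAlgebra actL_one actL_mul fun ℓ m => orbit_mul_of_act_mul (actL_alg · ℓ m))
    (.ofLinearMap δ δ_one δ_alg) F Finv hF_inv hF_equiv hF_cocycle

end
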